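/- Let (X, σ_X) be a one-sided subshift with the weak specification property, 𝓕 = {log f_n} a weakly almost additive sequence of continuous functions on X, and ν ∈ M(X, σ_X) an invariant Gibbs measure for 𝓕 with constants P ∈ ℝ and C_0 > 0, i.e. C_0^{-1} ≤ ν[x_1…x_n]/(e^{-nP} f_n(x)) ≤ C_0 for all x ∈ X and n ∈ ℕ. Suppose that for every x ∈ X the limit r(x) := lim_{n→∞} log(ν[x_1…x_n]/ν[x_2…x_n]) + P exists in ℝ. Then r is a bounded Borel measurable function on X, lim_{n→∞} (1/n) ∫ log f_n dμ = ∫ r dμ for every μ ∈ M(X, σ_X), and ν is an invariant weak Gibbs measure for r. -/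

import Mathlib

open MeasureTheory Filter Topology

noncomputable section

/-- The one-sided shift map. -/
def shift {A : Type*} : (ℕ → A) → ℕ → A := fun x i => x (i + 1)

/-- A finite word appears in some point of `X`. -/
def AppearsIn {A : Type*} (X : Set (ℕ → A)) (w : List A) : Prop :=
  ∃ x ∈ X, ∃ m : ℕ, ∀ i : Fin w.length, x (m + i) = w.get i

/-- `X` is a (one-sided) subshift: a closed, shift-invariant set. -/
def IsSubshift {A : Type*} [TopologicalSpace A] (X : Set (ℕ → A)) : Prop :=
  IsClosed X ∧ shift '' X ⊆ X

/-- The weak specification property. -/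
def WeakSpec {A : Type*} (X : Set (ℕ → A)) : Prop :=
  ∃ p : ℕ, ∀ u v : List A, AppearsIn X u → AppearsIn X v →
    ∃ w : List A, w.length ≤ p ∧ AppearsIn X (u ++ w ++ v)

/-- The cylinder set `[x_1 … x_n]` inside `X`. -/
def cyl {A : Type*} (X : Set (ℕ → A)) (x : ℕ → A) (n : ℕ) : Set (ℕ → A) :=
  {z ∈ X | ∀ i < n, z i = x i}

/-- Birkhoff sum `(S_n g)(x)`. -/
def birk {A : Type*} (g : (ℕ → A) → ℝ) (n : ℕ) (x : ℕ → A) : ℝ :=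
  ∑ i ∈ Finset.range n, g (shift^[i] x)

/-- `μ` is a shift-invariant Borel probability measure concentrated on `X`,
i.e. an element of `M(X, σ_X)`. -/
def IsInvariantOn {A : Type*} [MeasurableSpace A] (μ : Measure (ℕ → A))
    (X : Set (ℕ → A)) : Prop :=
  IsProbabilityMeasure μ ∧ μ X = 1 ∧
    ∀ B : Set (ℕ → A), MeasurableSet B → μ (shift ⁻¹' B) = μ B

/-- `μ` is a Gibbs measure for the sequence `𝓕 = {log f_n}`. -/
def GibbsSeq {A : Type*} [MeasurableSpace A] (X : Set (ℕ → A))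
    (f : ℕ → (ℕ → A) → ℝ) (μ : Measure (ℕ → A)) : Prop :=
  ∃ P C : ℝ, 0 < C ∧ ∀ x ∈ X, ∀ n : ℕ, 1 ≤ n →
    C⁻¹ ≤ (μ (cyl X x n)).toReal / (Real.exp (-(n : ℝ) * P) * f n x) ∧
    (μ (cyl X x n)).toReal / (Real.exp (-(n : ℝ) * P) * f n x) ≤ C

/-- `μ` is a weak Gibbs measure for the sequence `𝓕 = {log f_n}`. -/
def WeakGibbsSeq {A : Type*} [MeasurableSpace A] (X : Set (ℕ → A))
    (f : ℕ → (ℕ → A) → ℝ) (μ : Measure (ℕ → A)) : Prop :=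
  ∃ P : ℝ, ∃ C : ℕ → ℝ, (∀ n : ℕ, 1 ≤ n → 0 < C n) ∧
    Tendsto (fun n : ℕ => Real.log (C n) / n) atTop (𝓝 0) ∧
    ∀ x ∈ X, ∀ n : ℕ, 1 ≤ n →
      (C n)⁻¹ ≤ (μ (cyl X x n)).toReal / (Real.exp (-(n : ℝ) * P) * f n x) ∧
      (μ (cyl X x n)).toReal / (Real.exp (-(n : ℝ) * P) * f n x) ≤ C n

/-- `μ` is a Gibbs measure for the (Borel measurable) function `g`. -/
def GibbsFun {A : Type*} [MeasurableSpace A] (X : Set (ℕ → A))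
    (g : (ℕ → A) → ℝ) (μ : Measure (ℕ → A)) : Prop :=
  GibbsSeq X (fun n x => Real.exp (birk g n x)) μ

/-- `μ` is a weak Gibbs measure for the (Borel measurable) function `g`. -/
def WeakGibbsFun {A : Type*} [MeasurableSpace A] (X : Set (ℕ → A))
    (g : (ℕ → A) → ℝ) (μ : Measure (ℕ → A)) : Prop :=
  WeakGibbsSeq X (fun n x => Real.exp (birk g n x)) μ

/-- The sequence `{log f_n}` is almost additive on `X` with constant `C`. -/
def AAOn {A : Type*} (X : Set (ℕ → A)) (f : ℕ → (ℕ → A) → ℝ) (C : ℝ) : Prop :=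
  ∀ x ∈ X, ∀ n m : ℕ, 1 ≤ n → 1 ≤ m →
    Real.exp (-C) * (f n x * f m (shift^[n] x)) ≤ f (n + m) x ∧
    f (n + m) x ≤ Real.exp C * (f n x * f m (shift^[n] x))

/-- The sequence `{log f_n}` is weakly almost additive on `X`. -/
def WeakAAOn {A : Type*} (X : Set (ℕ → A)) (f : ℕ → (ℕ → A) → ℝ) : Prop :=
  ∃ C : ℕ → ℝ, (∀ n : ℕ, 1 ≤ n → 0 < C n) ∧
    Tendsto (fun n : ℕ => C n / n) atTop (𝓝 0) ∧
    ∀ x ∈ X, ∀ n m : ℕ, 1 ≤ n → 1 ≤ m →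
      Real.exp (-(C n)) * (f n x * f m (shift^[n] x)) ≤ f (n + m) x ∧
      f (n + m) x ≤ Real.exp (C n) * (f n x * f m (shift^[n] x))

/-!
Put `L n x = log ν[x_1…x_n] + n P`. The Gibbs property says that `L n` stays within `log C₀` of
`log f_n`, and the hypothesis on `r` says that `L (m + 1) x - L m (σ x) → r x`. Telescoping the
latter along the orbit gives `L (n + m) x - L m (σⁿ x) → (S_n r)(x)` as `m → ∞`, while weak almost
additivity keeps the left-hand side within `2 log C₀ + C_n` of `log f_n x` for every `m ≥ 1`.
Hence `|S_n r - log f_n| ≤ 2 log C₀ + C_n` on `X`. Since `L 1` takes only finitely many values, the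
case `n = 1` bounds `r`; the integral formula follows by integrating against an invariant measure
and dividing by `n`, and the weak Gibbs property by comparing `S_n r` with `L n` through `log f_n`.
-/

section RealBounds

theorem abs_log_sub_log_le_log_iff {a b C : ℝ} (ha : 0 < a) (hb : 0 < b) (hC : 0 < C) :
    |Real.log a - Real.log b| ≤ Real.log C ↔ C⁻¹ ≤ a / b ∧ a / b ≤ C := by
  rw [← Real.log_div ha.ne' hb.ne', abs_le, ← Real.log_inv,
    Real.log_le_log_iff (inv_pos.2 hC) (div_pos ha hb), Real.log_le_log_iff (div_pos ha hb) hC]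

theorem abs_log_sub_log_le_iff {a b c : ℝ} (ha : 0 < a) (hb : 0 < b) :
    |Real.log a - Real.log b| ≤ c ↔ Real.exp (-c) * b ≤ a ∧ a ≤ Real.exp c * b := by
  rw [← le_div_iff₀ hb, ← div_le_iff₀ hb, Real.exp_neg,
    ← abs_log_sub_log_le_log_iff ha hb (Real.exp_pos c), Real.log_exp]

theorem exists_abs_le_of_abs_sub_le {α : Type*} {X : Set α} {u v : α → ℝ} {c : ℝ}
    (hu : ∃ B, ∀ x ∈ X, |u x| ≤ B) (huv : ∀ x ∈ X, |v x - u x| ≤ c) :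
    ∃ B, ∀ x ∈ X, |v x| ≤ B := by
  obtain ⟨B, hB⟩ := hu
  refine ⟨c + B, fun x hx => ?_⟩
  calc |v x| ≤ |v x - u x| + |u x| := by simpa using abs_add_le (v x - u x) (u x)
    _ ≤ c + B := add_le_add (huv x hx) (hB x hx)

theorem tendsto_const_add_div_atTop_zero {C : ℕ → ℝ} (a : ℝ)
    (hC : Tendsto (fun n : ℕ => C n / n) atTop (𝓝 0)) :
    Tendsto (fun n : ℕ => (a + C n) / n) atTop (𝓝 0) := by
  simpa only [add_div, add_zero] using (tendsto_const_div_atTop_nhds_zero_nat a).add hC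

end RealBounds

section Cocycles

variable {α : Type*} {T : α → α} {X : Set α}

theorem tendsto_sub_iterate_birkhoffSum {E : Type*} [AddCommGroup E] [TopologicalSpace E]
    [ContinuousAdd E] {L : ℕ → α → E} {r : α → E} (hT : Set.MapsTo T X X)
    (hr : ∀ x ∈ X, Tendsto (fun m : ℕ => L (m + 1) x - L m (T x)) atTop (𝓝 (r x)))
    (n : ℕ) {x : α} (hx : x ∈ X) :
    Tendsto (fun m : ℕ => L (n + m) x - L m (T^[n] x)) atTop (𝓝 (birkhoffSum T r n x)) := by
  induction n with
  | zero => simpa using tendsto_const_nhds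
  | succ n ih =>
    rw [birkhoffSum_succ]
    refine ((ih.comp (tendsto_add_atTop_nat 1)).add (hr _ (hT.iterate n hx))).congr fun m => ?_
    rw [Function.comp_apply, sub_add_sub_cancel, Function.iterate_succ_apply', add_right_comm,
      add_assoc]

theorem abs_birkhoffSum_sub_le_of_almost_additive {L φ : ℕ → α → ℝ} {r : α → ℝ} {K : ℝ}
    {C : ℕ → ℝ} (hT : Set.MapsTo T X X)
    (hr : ∀ x ∈ X, Tendsto (fun m : ℕ => L (m + 1) x - L m (T x)) atTop (𝓝 (r x)))
    (hL : ∀ x ∈ X, ∀ n : ℕ, 1 ≤ n → |L n x - φ n x| ≤ K)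
    (hφ : ∀ x ∈ X, ∀ n m : ℕ, 1 ≤ n → 1 ≤ m → |φ (n + m) x - (φ n x + φ m (T^[n] x))| ≤ C n)
    {x : α} (hx : x ∈ X) {n : ℕ} (hn : 1 ≤ n) :
    |birkhoffSum T r n x - φ n x| ≤ 2 * K + C n := by
  have hlim := ((tendsto_sub_iterate_birkhoffSum hT hr n hx).sub_const (φ n x)).abs
  refine le_of_tendsto hlim ?_
  filter_upwards [eventually_ge_atTop 1] with m hm
  have hLnm := abs_le.1 (hL x hx (n + m) (by lia))
  have hLm := abs_le.1 (hL _ (hT.iterate n hx) m hm)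
  have hφnm := abs_le.1 (hφ x hx n m hn hm)
  exact abs_le.2 ⟨by linarith, by linarith⟩

end Cocycles

section Integration

variable {α : Type*} [MeasurableSpace α] {μ : Measure α}

theorem integrable_of_measurable_restrict_of_bound {X : Set α} {g : α → ℝ} [IsFiniteMeasure μ]
    (hX : MeasurableSet X) (hμ : ∀ᵐ x ∂μ, x ∈ X) (hg : Measurable fun x : X => g x)
    (hg_bdd : ∃ B, ∀ x ∈ X, |g x| ≤ B) : Integrable g μ := by
  obtain ⟨B, hB⟩ := hg_bdd
  have hg_ae := aemeasurable_restrict_of_measurable_subtype (μ := μ) hX hg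
  rw [Measure.restrict_eq_self_of_ae_mem hμ] at hg_ae
  exact .of_bound hg_ae.aestronglyMeasurable B (hμ.mono hB)

variable {E : Type*} [NormedAddCommGroup E] {T : α → α} {g : α → E}

theorem integrable_comp_iterate (hT : MeasurePreserving T μ μ) (hg : Integrable g μ) (n : ℕ) :
    Integrable (fun x => g (T^[n] x)) μ :=
  (hT.iterate n).integrable_comp_of_integrable hg

theorem integrable_birkhoffSum (hT : MeasurePreserving T μ μ) (hg : Integrable g μ) (n : ℕ) :
    Integrable (birkhoffSum T g n) μ :=
  integrable_finsetSum _ fun i _ => integrable_comp_iterate hT hg i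

variable [NormedSpace ℝ E]

theorem integral_birkhoffSum (hT : MeasurePreserving T μ μ) (hg : Integrable g μ) (n : ℕ) :
    ∫ x, birkhoffSum T g n x ∂μ = n • ∫ x, g x ∂μ := by
  have integral_comp_iterate (i : ℕ) : ∫ x, g (T^[i] x) ∂μ = ∫ x, g x ∂μ := by
    have hTi := hT.iterate i
    rw [← integral_map hTi.aemeasurable (hTi.map_eq.symm ▸ hg.aestronglyMeasurable), hTi.map_eq]
  simp only [birkhoffSum, integral_finsetSum _ fun i _ => integrable_comp_iterate hT hg i,
    integral_comp_iterate, Finset.sum_const, Finset.card_range]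

theorem tendsto_integral_of_norm_birkhoffSum_sub_le [IsProbabilityMeasure μ] {φ : ℕ → α → E}
    {c : ℕ → ℝ} (hT : MeasurePreserving T μ μ) (hg : Integrable g μ)
    (hφ : ∀ n : ℕ, 1 ≤ n → Integrable (φ n) μ)
    (hc : Tendsto (fun n : ℕ => c n / n) atTop (𝓝 0))
    (hbound : ∀ n : ℕ, 1 ≤ n → ∀ᵐ x ∂μ, ‖birkhoffSum T g n x - φ n x‖ ≤ c n) :
    Tendsto (fun n : ℕ => (1 / (n : ℝ)) • ∫ x, φ n x ∂μ) atTop (𝓝 (∫ x, g x ∂μ)) := by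
  rw [tendsto_iff_norm_sub_tendsto_zero]
  refine squeeze_zero' (.of_forall fun n => norm_nonneg _) ?_ hc
  filter_upwards [eventually_ge_atTop 1] with n hn
  have hn_pos : (0 : ℝ) < n := by exact_mod_cast hn
  have hint : ‖(n : ℝ) • ∫ x, g x ∂μ - ∫ x, φ n x ∂μ‖ ≤ c n := by
    rw [Nat.cast_smul_eq_nsmul, ← integral_birkhoffSum hT hg,
      ← integral_sub (integrable_birkhoffSum hT hg n) (hφ n hn)]
    simpa using norm_integral_le_of_norm_le_const (hbound n hn)
  calc ‖(1 / (n : ℝ)) • ∫ x, φ n x ∂μ - ∫ x, g x ∂μ‖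
      = ‖(1 / (n : ℝ)) • (∫ x, φ n x ∂μ - (n : ℝ) • ∫ x, g x ∂μ)‖ := by
        rw [smul_sub, smul_smul, one_div_mul_cancel hn_pos.ne', one_smul]
    _ = ‖(n : ℝ) • ∫ x, g x ∂μ - ∫ x, φ n x ∂μ‖ / n := by
        rw [norm_smul, Real.norm_of_nonneg (by positivity), norm_sub_rev, one_div_mul_eq_div]
    _ ≤ c n / n := by gcongr

end Integration

section DependsOn

variable {ι A β : Type*} {s : Set ι} {g : (ι → A) → β}

theorem finite_range_of_dependsOn [Finite A] [Finite s] (hg : DependsOn g s) :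
    (Set.range g).Finite := by
  rcases isEmpty_or_nonempty β with _ | _
  · exact Set.toFinite _
  · obtain ⟨G, rfl⟩ := dependsOn_iff_exists_comp.1 hg
    exact (Set.finite_range G).subset (Set.range_comp_subset_range _ _)

theorem measurable_of_dependsOn [Countable A] [MeasurableSpace A] [MeasurableSingletonClass A]
    [MeasurableSpace β] [Finite s] (hg : DependsOn g s) : Measurable g := by
  rcases isEmpty_or_nonempty β with _ | _
  · exact measurable_of_empty_codomain g
  · obtain ⟨G, rfl⟩ := dependsOn_iff_exists_comp.1 hg
    exact Measurable.of_discrete.comp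
      (measurable_pi_lambda _ fun i => measurable_pi_apply (i : ι))

end DependsOn

section Subshifts

variable {A : Type*} {X : Set (ℕ → A)} {f : ℕ → (ℕ → A) → ℝ}

theorem birk_eq_birkhoffSum (g : (ℕ → A) → ℝ) (n : ℕ) (x : ℕ → A) :
    birk g n x = birkhoffSum shift g n x := rfl

theorem WeakAAOn.exists_abs_log_sub_le (hf : WeakAAOn X f) (hshift : Set.MapsTo shift X X)
    (hpos : ∀ n : ℕ, 1 ≤ n → ∀ x ∈ X, 0 < f n x) :
    ∃ C : ℕ → ℝ, Tendsto (fun n : ℕ => C n / n) atTop (𝓝 0) ∧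
      ∀ x ∈ X, ∀ n m : ℕ, 1 ≤ n → 1 ≤ m → |Real.log (f (n + m) x) -
        (Real.log (f n x) + Real.log (f m (shift^[n] x)))| ≤ C n := by
  obtain ⟨C, -, hC, hbounds⟩ := hf
  refine ⟨C, hC, fun x hx n m hn hm => ?_⟩
  have hfn := hpos n hn x hx
  have hfm := hpos m hm _ (hshift.iterate n hx)
  rw [← Real.log_mul hfn.ne' hfm.ne',
    abs_log_sub_log_le_iff (hpos _ (by lia) x hx) (mul_pos hfn hfm)]
  exact hbounds x hx n m hn hm

variable [MeasurableSpace A] {μ ν : Measure (ℕ → A)} {P : ℝ}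

theorem measurable_shift : Measurable (shift : (ℕ → A) → ℕ → A) :=
  measurable_pi_lambda _ fun i => measurable_pi_apply (i + 1)

theorem IsInvariantOn.measurePreserving_shift (hμ : IsInvariantOn μ X) :
    MeasurePreserving shift μ μ :=
  ⟨measurable_shift, Measure.ext fun B hB => by
    rw [Measure.map_apply measurable_shift hB, hμ.2.2 B hB]⟩

theorem IsInvariantOn.ae_mem (hμ : IsInvariantOn μ X) (hX : MeasurableSet X) :
    ∀ᵐ x ∂μ, x ∈ X :=
  have := hμ.1
  (mem_ae_iff_prob_eq_one hX).2 hμ.2.1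

theorem IsInvariantOn.tendsto_integral_of_abs_birkhoffSum_sub_le (hμ : IsInvariantOn μ X)
    (hX : MeasurableSet X) {g : (ℕ → A) → ℝ} {φ : ℕ → (ℕ → A) → ℝ} {c : ℕ → ℝ}
    (hg : Measurable fun x : X => g x) (hg_bdd : ∃ B, ∀ x ∈ X, |g x| ≤ B)
    (hφ : ∀ n : ℕ, 1 ≤ n → Measurable fun x : X => φ n x)
    (hφ_bdd : ∀ n : ℕ, 1 ≤ n → ∃ B, ∀ x ∈ X, |φ n x| ≤ B)
    (hc : Tendsto (fun n : ℕ => c n / n) atTop (𝓝 0))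
    (hbound : ∀ x ∈ X, ∀ n : ℕ, 1 ≤ n → |birkhoffSum shift g n x - φ n x| ≤ c n) :
    Tendsto (fun n : ℕ => (1 / (n : ℝ)) * ∫ x, φ n x ∂μ) atTop (𝓝 (∫ x, g x ∂μ)) := by
  have := hμ.1
  have hμX := hμ.ae_mem hX
  exact tendsto_integral_of_norm_birkhoffSum_sub_le hμ.measurePreserving_shift
    (integrable_of_measurable_restrict_of_bound hX hμX hg hg_bdd)
    (fun n hn => integrable_of_measurable_restrict_of_bound hX hμX (hφ n hn) (hφ_bdd n hn))
    hc fun n hn => hμX.mono fun x hx => hbound x hx n hn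

/-- The logarithmic mass `log ν[x_1…x_n] + n P` of a cylinder, normalised by the pressure `P` so
that a Gibbs measure for `{log f_n}` has `logMass` within a constant of `log f_n`. It takes the
junk value `n P` on cylinders of zero or infinite measure. -/
def logMass (X : Set (ℕ → A)) (ν : Measure (ℕ → A)) (P : ℝ) (n : ℕ) (x : ℕ → A) : ℝ :=
  Real.log (ν (cyl X x n)).toReal + n * P

theorem abs_logMass_sub_log_le_log_iff {n : ℕ} {x : ℕ → A} {y C : ℝ}
    (hν : 0 < (ν (cyl X x n)).toReal) (hy : 0 < y) (hC : 0 < C) :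
    |logMass X ν P n x - Real.log y| ≤ Real.log C ↔
      C⁻¹ ≤ (ν (cyl X x n)).toReal / (Real.exp (-(n : ℝ) * P) * y) ∧
      (ν (cyl X x n)).toReal / (Real.exp (-(n : ℝ) * P) * y) ≤ C := by
  rw [← abs_log_sub_log_le_log_iff hν (by positivity) hC,
    Real.log_mul (Real.exp_ne_zero _) hy.ne', Real.log_exp, logMass]
  ring_nf

theorem weakGibbsFun_of_abs_logMass_sub_birk_le {g : (ℕ → A) → ℝ} {c : ℕ → ℝ}
    (hν : ∀ x ∈ X, ∀ n : ℕ, 1 ≤ n → 0 < (ν (cyl X x n)).toReal)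
    (hc : Tendsto (fun n : ℕ => c n / n) atTop (𝓝 0))
    (hg : ∀ x ∈ X, ∀ n : ℕ, 1 ≤ n → |logMass X ν P n x - birk g n x| ≤ c n) :
    WeakGibbsFun X g ν := by
  refine ⟨P, fun n => Real.exp (c n), fun n _ => Real.exp_pos _, by simpa using hc,
    fun x hx n hn => ?_⟩
  rw [← abs_logMass_sub_log_le_log_iff (hν x hx n hn) (Real.exp_pos _) (Real.exp_pos _),
    Real.log_exp, Real.log_exp]
  exact hg x hx n hn

theorem tendsto_logMass_succ_sub_logMass_shift {l : ℝ}
    (hν : ∀ x ∈ X, ∀ n : ℕ, 1 ≤ n → 0 < (ν (cyl X x n)).toReal)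
    (hshift : Set.MapsTo shift X X) {x : ℕ → A} (hx : x ∈ X)
    (hr : Tendsto (fun n : ℕ => Real.log
      ((ν (cyl X x (n + 2))).toReal / (ν (cyl X (shift x) (n + 1))).toReal) + P) atTop (𝓝 l)) :
    Tendsto (fun n : ℕ => logMass X ν P (n + 1) x - logMass X ν P n (shift x)) atTop (𝓝 l) := by
  refine (tendsto_add_atTop_iff_nat 1).1 (hr.congr fun n => ?_)
  rw [Real.log_div (hν x hx _ (by lia)).ne' (hν _ (hshift hx) _ (by lia)).ne', logMass, logMass]
  push_cast
  ring

theorem dependsOn_logMass (X : Set (ℕ → A)) (ν : Measure (ℕ → A)) (P : ℝ) (n : ℕ) :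
    DependsOn (logMass X ν P n) (Set.Iio n) := by
  intro x y hxy
  have hcyl : cyl X x n = cyl X y n := by
    ext z
    exact and_congr_right fun _ => forall₂_congr fun i hi => by rw [hxy i hi]
  rw [logMass, logMass, hcyl]

theorem exists_abs_logMass_le [Finite A] (X : Set (ℕ → A)) (ν : Measure (ℕ → A)) (P : ℝ)
    (n : ℕ) : ∃ B : ℝ, ∀ x, |logMass X ν P n x| ≤ B := by
  obtain ⟨B, hB⟩ :=
    (finite_range_of_dependsOn (dependsOn_logMass X ν P n)).isBounded.exists_norm_le
  exact ⟨B, fun x => hB _ ⟨x, rfl⟩⟩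

theorem measurable_of_tendsto_logMass_sub [Countable A] [MeasurableSingletonClass A]
    {r : (ℕ → A) → ℝ} (hr : ∀ x ∈ X, Tendsto (fun n : ℕ =>
      logMass X ν P (n + 1) x - logMass X ν P n (shift x)) atTop (𝓝 (r x))) :
    Measurable fun x : X => r x := by
  have logMass_meas (n : ℕ) : Measurable (logMass X ν P n) :=
    measurable_of_dependsOn (dependsOn_logMass X ν P n)
  refine measurable_of_tendsto_metrizable (fun n => ?_) (tendsto_pi_nhds.2 fun x => hr x x.2)
  exact ((logMass_meas (n + 1)).sub ((logMass_meas n).comp measurable_shift)).comp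
    measurable_subtype_coe

end Subshifts

theorem stmt_9_general {A : Type*} [Finite A] [MeasurableSpace A] [MeasurableSingletonClass A]
    {X : Set (ℕ → A)} (hX : MeasurableSet X) (hshift : Set.MapsTo shift X X)
    {f : ℕ → (ℕ → A) → ℝ} (hf_meas : ∀ n : ℕ, 1 ≤ n → Measurable fun x : X => f n x)
    (hf_pos : ∀ n : ℕ, 1 ≤ n → ∀ x ∈ X, 0 < f n x) (hf : WeakAAOn X f)
    {ν : Measure (ℕ → A)} {P C₀ : ℝ} (hC₀ : 0 < C₀)
    (hGibbs : ∀ x ∈ X, ∀ n : ℕ, 1 ≤ n →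
      C₀⁻¹ ≤ (ν (cyl X x n)).toReal / (Real.exp (-(n : ℝ) * P) * f n x) ∧
      (ν (cyl X x n)).toReal / (Real.exp (-(n : ℝ) * P) * f n x) ≤ C₀)
    {r : (ℕ → A) → ℝ}
    (hr : ∀ x ∈ X, Tendsto (fun n : ℕ =>
      Real.log ((ν (cyl X x (n + 2))).toReal / (ν (cyl X (shift x) (n + 1))).toReal) + P)
      atTop (𝓝 (r x))) :
    Measurable (fun x : X => r x) ∧
    (∃ B : ℝ, ∀ x ∈ X, |r x| ≤ B) ∧
    (∀ μ : Measure (ℕ → A), IsInvariantOn μ X →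
      Tendsto (fun n : ℕ => (1 / (n : ℝ)) * ∫ x, Real.log (f n x) ∂μ) atTop
        (𝓝 (∫ x, r x ∂μ))) ∧
    WeakGibbsFun X r ν := by
  obtain ⟨C, hC, hf_add⟩ := hf.exists_abs_log_sub_le hshift hf_pos
  have hν_pos : ∀ x ∈ X, ∀ n : ℕ, 1 ≤ n → 0 < (ν (cyl X x n)).toReal := fun x hx n hn =>
    (div_pos_iff_of_pos_right (mul_pos (Real.exp_pos _) (hf_pos n hn x hx))).1
      ((inv_pos.2 hC₀).trans_le (hGibbs x hx n hn).1)
  have hlogMass : ∀ x ∈ X, ∀ n : ℕ, 1 ≤ n →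
      |logMass X ν P n x - Real.log (f n x)| ≤ Real.log C₀ := fun x hx n hn =>
    (abs_logMass_sub_log_le_log_iff (hν_pos x hx n hn) (hf_pos n hn x hx) hC₀).2
      (hGibbs x hx n hn)
  have hr_lim : ∀ x ∈ X, Tendsto (fun n : ℕ =>
      logMass X ν P (n + 1) x - logMass X ν P n (shift x)) atTop (𝓝 (r x)) := fun x hx =>
    tendsto_logMass_succ_sub_logMass_shift hν_pos hshift hx (hr x hx)
  have hbirk : ∀ x ∈ X, ∀ n : ℕ, 1 ≤ n →
      |birkhoffSum shift r n x - Real.log (f n x)| ≤ 2 * Real.log C₀ + C n := fun x hx n hn =>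
    abs_birkhoffSum_sub_le_of_almost_additive hshift hr_lim hlogMass hf_add hx hn
  have hlogf_bdd (n : ℕ) (hn : 1 ≤ n) : ∃ B, ∀ x ∈ X, |Real.log (f n x)| ≤ B :=
    exists_abs_le_of_abs_sub_le ((exists_abs_logMass_le X ν P n).imp fun B hB x _ => hB x)
      fun x hx => abs_sub_comm (Real.log (f n x)) _ ▸ hlogMass x hx n hn
  have hr_meas := measurable_of_tendsto_logMass_sub hr_lim
  have hr_bdd : ∃ B, ∀ x ∈ X, |r x| ≤ B :=
    exists_abs_le_of_abs_sub_le (hlogf_bdd 1 le_rfl) fun x hx => by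
      simpa only [birkhoffSum_one] using hbirk x hx 1 le_rfl
  refine ⟨hr_meas, hr_bdd, fun μ hμ => ?_, ?_⟩
  · exact hμ.tendsto_integral_of_abs_birkhoffSum_sub_le hX hr_meas hr_bdd
      (fun n hn => (hf_meas n hn).log) hlogf_bdd (tendsto_const_add_div_atTop_zero _ hC) hbirk
  · refine weakGibbsFun_of_abs_logMass_sub_birk_le (P := P) hν_pos
      (tendsto_const_add_div_atTop_zero (3 * Real.log C₀) hC) fun x hx n hn => ?_
    have hmass := abs_le.1 (hlogMass x hx n hn)
    have hsum := abs_le.1 (hbirk x hx n hn)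
    rw [birk_eq_birkhoffSum]
    exact abs_le.2 ⟨by linarith, by linarith⟩

/-- Theorem `cando1` (ii): for a weakly almost additive `𝓕` with
invariant Gibbs measure `ν`, if `r(x) = lim log(ν[x_1…x_n]/ν[x_2…x_n]) + P` exists
everywhere, then `r` is bounded Borel measurable, `(1/n)∫ log f_n dμ → ∫ r dμ` for every
invariant `μ`, and `ν` is an invariant weak Gibbs measure for `r`. -/
theorem stmt_9 {k : ℕ} (X : Set (ℕ → Fin k))
    (hX : IsSubshift X) (hspec : WeakSpec X)
    (f : ℕ → (ℕ → Fin k) → ℝ)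
    (hfc : ∀ n : ℕ, 1 ≤ n → ContinuousOn (f n) X)
    (hfpos : ∀ n : ℕ, 1 ≤ n → ∀ x ∈ X, 0 < f n x)
    (hWAA : WeakAAOn X f)
    (ν : Measure (ℕ → Fin k)) (hν : IsInvariantOn ν X)
    (P C₀ : ℝ) (hC₀ : 0 < C₀)
    (hGibbs : ∀ x ∈ X, ∀ n : ℕ, 1 ≤ n →
      C₀⁻¹ ≤ (ν (cyl X x n)).toReal / (Real.exp (-(n : ℝ) * P) * f n x) ∧
      (ν (cyl X x n)).toReal / (Real.exp (-(n : ℝ) * P) * f n x) ≤ C₀)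
    (r : (ℕ → Fin k) → ℝ)
    (hr : ∀ x ∈ X, Tendsto (fun n : ℕ =>
      Real.log ((ν (cyl X x (n + 2))).toReal / (ν (cyl X (shift x) (n + 1))).toReal) + P)
      atTop (𝓝 (r x))) :
    Measurable (fun x : X => r ↑x) ∧
    (∃ B : ℝ, ∀ x ∈ X, |r x| ≤ B) ∧
    (∀ μ : Measure (ℕ → Fin k), IsInvariantOn μ X →
      Tendsto (fun n : ℕ => (1 / (n : ℝ)) * ∫ x, Real.log (f n x) ∂μ) atTop
        (𝓝 (∫ x, r x ∂μ))) ∧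
    WeakGibbsFun X r ν := by
  exact stmt_9_general hX.1.measurableSet (Set.mapsTo_iff_image_subset.2 hX.2)
    (fun n hn => (hfc n hn).domRestrict.measurable) hfpos hWAA hC₀ hGibbs hr
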